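/- The limit as N → ∞ of #(W̃ ∩ [1,N]²)/N² exists and equals 10/(3π²); that is, the number of pairs (p,q) ∈ W̃ with 1 ≤ p ≤ N and 1 ≤ q ≤ N, divided by N², tends to 10/(3π²). -/

import Mathlib

open Filter Topology

/-- `Γ = {(2k-1)·2^{2ℓ-1} : k, ℓ ∈ ℕ_{>0}}`. -/
def Gamma : Set ℕ := {m | ∃ k l : ℕ, 0 < k ∧ 0 < l ∧ m = (2*k-1) * 2^(2*l-1)}

/-- `W̃ = {(p,q) ∈ ℕ² : p ∉ Γ, q ∉ Γ, p and q coprime}`. -/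
def Wtilde : Set (ℕ × ℕ) :=
  {pq | pq.1 ∉ Gamma ∧ pq.2 ∉ Gamma ∧ Nat.Coprime pq.1 pq.2}

open Classical in
/-- multiples of `d` up to `N` satisfying `P`. -/
noncomputable def cntMul (P : ℕ → Prop) (d N : ℕ) : ℕ :=
  ((Finset.Icc 1 N).filter (fun p => d ∣ p ∧ P p)).card

open Classical in
/-- numbers up to `N` satisfying `P`. -/
noncomputable def cnt (P : ℕ → Prop) (N : ℕ) : ℕ :=
  ((Finset.Icc 1 N).filter (fun p => P p)).card

theorem cntMul_eq (P : ℕ → Prop) (d N : ℕ) (hd : 0 < d) :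
    cntMul P d N = cnt (fun k => P (d * k)) (N / d) := by
  classical
  unfold cntMul cnt
  symm
  apply Finset.card_bij (fun k _ => d * k)
  · intro k hk
    simp only [Finset.mem_filter, Finset.mem_Icc] at hk ⊢
    have := (Nat.le_div_iff_mul_le hd).1 hk.1.2
    refine ⟨⟨Nat.mul_pos hd hk.1.1, by linarith⟩, dvd_mul_right _ _, hk.2⟩
  · intro a _ b _ h
    exact Nat.eq_of_mul_eq_mul_left hd h
  · intro b hb
    simp only [Finset.mem_filter, Finset.mem_Icc] at hb
    obtain ⟨⟨h1, h2⟩, ⟨k, rfl⟩, h3⟩ := hb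
    refine ⟨k, ?_, rfl⟩
    simp only [Finset.mem_filter, Finset.mem_Icc]
    refine ⟨⟨Nat.pos_of_mul_pos_left h1, (Nat.le_div_iff_mul_le hd).2 (by linarith)⟩, h3⟩

theorem cnt_congr {P Q : ℕ → Prop} (N : ℕ) (h : ∀ k, 0 < k → (P k ↔ Q k)) :
    cnt P N = cnt Q N := by
  classical
  unfold cnt
  congr 1
  apply Finset.filter_congr
  intro k hk
  exact h k (Finset.mem_Icc.1 hk).1

theorem cnt_add_not (P : ℕ → Prop) (N : ℕ) :
    cnt P N + cnt (fun k => ¬ P k) N = N := by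
  classical
  unfold cnt
  rw [Finset.card_filter_add_card_filter_not]
  simp

theorem cnt_le (P : ℕ → Prop) (N : ℕ) : cnt P N ≤ N := by
  have := cnt_add_not P N
  omega

theorem mem_Gamma_iff (m : ℕ) (hm : 0 < m) : m ∈ Gamma ↔ Odd (padicValNat 2 m) := by
  have : Fact (Nat.Prime 2) := ⟨Nat.prime_two⟩
  constructor
  · rintro ⟨k, l, hk, hl, rfl⟩
    rw [padicValNat.mul (by omega) (by positivity), padicValNat.prime_pow,
      padicValNat.eq_zero_of_not_dvd (by omega)]
    exact ⟨l - 1, by omega⟩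
  · rintro ⟨j, hj⟩
    obtain ⟨c, hc⟩ := (pow_padicValNat_dvd : 2 ^ padicValNat 2 m ∣ m)
    have hodd : ¬ 2 ∣ c := by
      rintro ⟨e, rfl⟩
      apply pow_succ_padicValNat_not_dvd (p := 2) hm.ne'
      exact ⟨e, by rw [pow_succ]; linarith⟩
    refine ⟨(c + 1) / 2, j + 1, by omega, by omega, ?_⟩
    have e1 : 2 * ((c + 1) / 2) - 1 = c := by omega
    have e2 : 2 * (j + 1) - 1 = padicValNat 2 m := by omega
    rw [e1, e2, mul_comm]
    exact hc

theorem Gamma_odd_mul (d k : ℕ) (hd : Odd d) (hk : 0 < k) : d * k ∈ Gamma ↔ k ∈ Gamma := by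
  have : Fact (Nat.Prime 2) := ⟨Nat.prime_two⟩
  rw [mem_Gamma_iff _ (Nat.mul_pos hd.pos hk), mem_Gamma_iff _ hk,
    padicValNat.mul hd.pos.ne' hk.ne', padicValNat.eq_zero_of_not_dvd (n := d), zero_add]
  rcases hd with ⟨r, rfl⟩
  omega

theorem Gamma_two_mul (k : ℕ) (hk : 0 < k) : 2 * k ∈ Gamma ↔ k ∉ Gamma := by
  have : Fact (Nat.Prime 2) := ⟨Nat.prime_two⟩
  rw [mem_Gamma_iff _ (by omega), mem_Gamma_iff _ hk,
    padicValNat.mul (by omega) hk.ne', padicValNat.self (by omega)]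
  grind

theorem odd_notMem_Gamma (d : ℕ) (hd : Odd d) : d ∉ Gamma := by
  rw [mem_Gamma_iff _ hd.pos, padicValNat.eq_zero_of_not_dvd]
  · simp
  · rcases hd with ⟨r, rfl⟩
    omega

theorem cnt_split (P : ℕ → Prop) (N : ℕ) :
    cnt P N = cntMul P 2 N + cnt (fun k => ¬ 2 ∣ k ∧ P k) N := by
  classical
  unfold cnt cntMul
  rw [← Finset.card_filter_add_card_filter_not (s := (Finset.Icc 1 N).filter P) (fun k => 2 ∣ k),
    Finset.filter_filter, Finset.filter_filter]
  simp only [and_comm]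

theorem cnt_rec (N : ℕ) : cnt (fun k => k ∉ Gamma) N + cnt (fun k => k ∉ Gamma) (N / 2) = N := by
  have h1 := cnt_split (fun k => k ∉ Gamma) N
  have h2 := cnt_split (fun _ => True) N
  rw [cntMul_eq _ _ _ two_pos] at h1 h2
  have h3 : cnt (fun _ => True) N = N := by simp [cnt]
  have h4 : cnt (fun _ => True) (N / 2) = N / 2 := by simp [cnt]
  have h5 : cnt (fun k => ¬ 2 ∣ k ∧ k ∉ Gamma) N = cnt (fun k => ¬ 2 ∣ k ∧ True) N := by
    apply cnt_congr
    intro k hk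
    constructor
    · intro h; exact ⟨h.1, trivial⟩
    · intro h; exact ⟨h.1, odd_notMem_Gamma k (by rw [Nat.odd_iff]; omega)⟩
  have h6 : cnt (fun k => 2 * k ∉ Gamma) (N / 2) = cnt (fun k => ¬ (k ∉ Gamma)) (N / 2) := by
    apply cnt_congr
    intro k hk
    rw [Gamma_two_mul k hk]
  have h7 := cnt_add_not (fun k => k ∉ Gamma) (N / 2)
  omega

theorem cnt_bound (N : ℕ) :
    |(cnt (fun k => k ∉ Gamma) N : ℝ) - 2 / 3 * N| ≤ Nat.log 2 N + 1 := by
  induction N using Nat.strong_induction_on with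
  | _ N ih =>
    rcases lt_or_ge N 2 with h | h
    · have h1 := cnt_le (fun k => k ∉ Gamma) N
      have h2 : (cnt (fun k => k ∉ Gamma) N : ℝ) ≤ N := by exact_mod_cast h1
      have h3 : (N : ℝ) ≤ 1 := by exact_mod_cast (by omega : N ≤ 1)
      have h4 : (0 : ℝ) ≤ cnt (fun k => k ∉ Gamma) N := by positivity
      have h5 : (0 : ℝ) ≤ Nat.log 2 N := by positivity
      rw [abs_le]
      constructor <;> linarith
    · have h1 := ih (N / 2) (by omega)
      have h2 : (cnt (fun k => k ∉ Gamma) N : ℝ) + cnt (fun k => k ∉ Gamma) (N / 2) = N := by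
        exact_mod_cast cnt_rec N
      have h3 : Nat.log 2 N = Nat.log 2 (N / 2) + 1 := Nat.log_of_one_lt_of_le (by omega) h
      have h4 : (2 : ℝ) * (N / 2 : ℕ) ≤ N := by exact_mod_cast (by omega : 2 * (N / 2) ≤ N)
      have h5 : (N : ℝ) ≤ 2 * (N / 2 : ℕ) + 1 := by exact_mod_cast (by omega : N ≤ 2 * (N / 2) + 1)
      rw [h3]
      push_cast
      rw [abs_le] at h1 ⊢
      constructor <;> linarith

theorem cnt_tendsto :
    Tendsto (fun N : ℕ => (cnt (fun k => k ∉ Gamma) N : ℝ) / N) atTop (𝓝 (2 / 3)) := by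
  have hlog : Tendsto (fun N : ℕ => ((Nat.log 2 N : ℝ) + 1) / N) atTop (𝓝 0) := by
    have h1 : Tendsto (fun N : ℕ => Real.logb 2 N / N) atTop (𝓝 0) := by
      have := Real.isLittleO_log_id_atTop.tendsto_div_nhds_zero.comp
        (tendsto_natCast_atTop_atTop (R := ℝ))
      have h := this.div_const (Real.log 2)
      simp only [zero_div] at h
      refine h.congr ?_
      intro N
      simp only [Function.comp, id, Real.logb]
      ring
    have h2 : Tendsto (fun N : ℕ => (1 : ℝ) / N) atTop (𝓝 0) := tendsto_one_div_atTop_nhds_zero_nat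
    have h3 := h1.add h2
    rw [add_zero] at h3
    refine squeeze_zero (fun N => by positivity) (fun N => ?_) h3
    rw [← add_div]
    gcongr
    exact Real.natLog_le_logb N 2
  rw [tendsto_iff_dist_tendsto_zero]
  refine squeeze_zero' (Eventually.of_forall fun N => dist_nonneg) ?_ hlog
  filter_upwards [eventually_gt_atTop 0] with N hN
  have hN' : (0 : ℝ) < N := by exact_mod_cast hN
  rw [Real.dist_eq, show (cnt (fun k => k ∉ Gamma) N : ℝ) / N - 2 / 3
    = ((cnt (fun k => k ∉ Gamma) N : ℝ) - 2 / 3 * N) / N by field_simp, abs_div, abs_of_pos hN']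
  gcongr
  exact cnt_bound N

theorem cnt_not_tendsto :
    Tendsto (fun N : ℕ => (cnt (fun k => ¬ (k ∉ Gamma)) N : ℝ) / N) atTop (𝓝 (1 / 3)) := by
  have h := cnt_tendsto.const_sub 1
  rw [show (1 : ℝ) - 2 / 3 = 1 / 3 by norm_num] at h
  refine h.congr' ?_
  filter_upwards [eventually_gt_atTop 0] with N hN
  have hN' : (0 : ℝ) < N := by exact_mod_cast hN
  have := cnt_add_not (fun k => k ∉ Gamma) N
  have h2 : (cnt (fun k => k ∉ Gamma) N : ℝ) + cnt (fun k => ¬ (k ∉ Gamma)) N = N := by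
    exact_mod_cast this
  field_simp
  linarith

theorem div_tendsto (d : ℕ) (hd : 0 < d) (f : ℕ → ℝ) (c : ℝ)
    (hf : Tendsto (fun N : ℕ => f N / N) atTop (𝓝 c)) :
    Tendsto (fun N : ℕ => f (N / d) / N) atTop (𝓝 (c / d)) := by
  have h0 : Tendsto (fun N : ℕ => N / d) atTop atTop := Nat.tendsto_div_const_atTop hd.ne'
  have h1 := hf.comp h0
  have h2 : Tendsto (fun N : ℕ => ((N / d : ℕ) : ℝ) / N) atTop (𝓝 (1 / d)) := by
    have := (tendsto_nat_floor_mul_div_atTop (R := ℝ) (a := 1 / d) (by positivity)).comp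
      (tendsto_natCast_atTop_atTop (R := ℝ))
    refine this.congr ?_
    intro N
    simp only [Function.comp]
    rw [one_div_mul_eq_div, Nat.floor_div_eq_div]
  have h3 := h1.mul h2
  rw [mul_one_div] at h3
  refine h3.congr' ?_
  filter_upwards [eventually_ge_atTop d] with N hN
  have : 0 < N / d := Nat.div_pos hN hd
  have : ((N / d : ℕ) : ℝ) ≠ 0 := by exact_mod_cast this.ne'
  simp only [Function.comp]
  field_simp

open ArithmeticFunction in
/-- odd part of the summand -/
noncomputable def hO (d : ℕ) : ℝ := if Odd d then (moebius d : ℝ) / (d : ℝ) ^ 2 else 0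

open ArithmeticFunction in
/-- even part of the summand -/
noncomputable def hE (d : ℕ) : ℝ := if Odd d then 0 else (moebius d : ℝ) / (d : ℝ) ^ 2

open ArithmeticFunction in
theorem term_tendsto (d : ℕ) :
    Tendsto (fun N : ℕ => (moebius d : ℝ) * ((cntMul (fun k => k ∉ Gamma) d N : ℝ) / N) ^ 2) atTop
      (𝓝 (4 / 9 * hO d + 1 / 9 * hE d)) := by
  by_cases hsq : Squarefree d
  swap
  · simp [hO, hE, moebius_eq_zero_of_not_squarefree hsq]
  have hd : 0 < d := Nat.pos_of_ne_zero hsq.ne_zero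
  by_cases ho : Odd d
  · have h := ((div_tendsto d hd _ _ cnt_tendsto).pow 2).const_mul (moebius d : ℝ)
    have e : (moebius d : ℝ) * (2 / 3 / (d : ℝ)) ^ 2 = 4 / 9 * hO d + 1 / 9 * hE d := by
      simp only [hO, hE, ho, if_true]
      field_simp
      ring
    rw [e] at h
    refine h.congr fun N => ?_
    rw [cntMul_eq _ _ _ hd, cnt_congr (N / d) (fun k hk => (Gamma_odd_mul d k ho hk).not)]
  · have h := ((div_tendsto d hd _ _ cnt_not_tendsto).pow 2).const_mul (moebius d : ℝ)
    have e : (moebius d : ℝ) * (1 / 3 / (d : ℝ)) ^ 2 = 4 / 9 * hO d + 1 / 9 * hE d := by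
      simp only [hO, hE, ho, if_false]
      field_simp
      ring
    rw [e] at h
    refine h.congr fun N => ?_
    rw [cntMul_eq _ _ _ hd]
    congr 4
    apply cnt_congr
    intro k hk
    obtain ⟨m, hm⟩ := (even_iff_two_dvd.1 (Nat.not_odd_iff_even.1 ho))
    have hmo : Odd m := by
      by_contra hme
      obtain ⟨r, hr⟩ := (even_iff_two_dvd.1 (Nat.not_odd_iff_even.1 hme))
      have := hsq 2 ⟨r, by rw [hm, hr]; ring⟩
      simp at this
    rw [hm, mul_assoc, Gamma_two_mul _ (Nat.mul_pos hmo.pos hk), Gamma_odd_mul m k hmo hk]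

open ArithmeticFunction in
theorem hasSum_mu : HasSum (fun d : ℕ => (moebius d : ℝ) / (d : ℝ) ^ 2) (6 / Real.pi ^ 2) := by
  have h2 : (1 : ℝ) < (2 : ℂ).re := by norm_num
  have h1 := (LSeriesSummable_moebius_iff (s := 2)).2 h2
  have h3 := LSeries_zeta_mul_Lseries_moebius h2
  rw [LSeries_zeta_eq_riemannZeta h2, riemannZeta_two] at h3
  have hpi : (Real.pi : ℂ) ≠ 0 := by exact_mod_cast Real.pi_ne_zero
  have h4 : LSeries (fun n => ((moebius n : ℤ) : ℂ)) 2 = ((6 / Real.pi ^ 2 : ℝ) : ℂ) := by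
    push_cast
    field_simp
    field_simp at h3
    linear_combination h3
  have h5 := h1.LSeriesHasSum
  rw [h4] at h5
  unfold LSeriesHasSum at h5
  rw [← Complex.hasSum_ofReal]
  convert h5 using 2 with d
  rw [LSeries.term_of_ne_zero' two_ne_zero]
  push_cast
  congr 1
  exact_mod_cast (Complex.cpow_natCast (d : ℂ) 2).symm

theorem hasSum_OE : HasSum (fun d => 4 / 9 * hO d + 1 / 9 * hE d) (10 / (3 * Real.pi ^ 2)) := by
  have hm := hasSum_mu
  have hOs : Summable hO := by
    refine Summable.of_norm_bounded hm.summable.norm ?_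
    intro d
    unfold hO
    split_ifs
    · exact le_rfl
    · rw [norm_zero]; exact norm_nonneg _
  obtain ⟨O, hOO⟩ := hOs
  have hEE : HasSum hE (-1 / 4 * O) := by
    have h1 : HasSum (fun k => hE (2 * k)) (-1 / 4 * O) := by
      have h0 := hOO.mul_left (-1 / 4)
      have e : (fun k => hE (2 * k)) = fun k => -1 / 4 * hO k := by
        funext k
        have hne : ¬ Odd (2 * k) := by simp
        unfold hE hO
        rw [if_neg hne]
        split_ifs with ho
        · rw [ArithmeticFunction.isMultiplicative_moebius.map_mul_of_coprime
            ((Nat.coprime_two_left).2 ho), ArithmeticFunction.moebius_apply_prime Nat.prime_two]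
          push_cast
          field_simp
          ring
        · obtain ⟨r, hr⟩ := (even_iff_two_dvd.1 (Nat.not_odd_iff_even.1 ho))
          rw [ArithmeticFunction.moebius_eq_zero_of_not_squarefree]
          · simp
          · intro hsq
            have := hsq 2 ⟨r, by rw [hr]; ring⟩
            simp at this
      rw [e]
      exact h0
    have h2 : HasSum (fun k => hE (2 * k + 1)) 0 := by
      convert hasSum_zero with k
      simp [hE]
    simpa using h1.even_add_odd h2
  have h3 : HasSum (fun d : ℕ => (ArithmeticFunction.moebius d : ℝ) / (d : ℝ) ^ 2)
      (O + -1 / 4 * O) := by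
    convert hOO.add hEE with d
    unfold hO hE
    split_ifs <;> simp
  have h4 := h3.unique hm
  have h6 := (hOO.mul_left (4 / 9)).add (hEE.mul_left (1 / 9))
  have : O = 8 / Real.pi ^ 2 := by
    have : O = 4 / 3 * (6 / Real.pi ^ 2) := by linarith
    rw [this]; ring
  have h7 : 4 / 9 * O + 1 / 9 * (-1 / 4 * O) = 10 / (3 * Real.pi ^ 2) := by
    rw [this]
    field_simp
    norm_num
  rw [h7] at h6
  exact h6

open ArithmeticFunction in
theorem sum_mu_divisors (n : ℕ) : ∑ d ∈ n.divisors, (moebius d : ℝ) = if n = 1 then 1 else 0 := by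
  have h := congrArg (fun f : ArithmeticFunction ℤ => f n) moebius_mul_coe_zeta
  simp only [coe_mul_zeta_apply, one_apply] at h
  exact_mod_cast h

open ArithmeticFunction in
theorem count_eq (N : ℕ) :
    ((Wtilde ∩ {pq : ℕ × ℕ | pq.1 ∈ Set.Icc 1 N ∧ pq.2 ∈ Set.Icc 1 N}).ncard : ℝ)
      = ∑ d ∈ Finset.Icc 1 N, (moebius d : ℝ) * (cntMul (fun k => k ∉ Gamma) d N : ℝ) ^ 2 := by
  classical
  set A := (Finset.Icc 1 N).filter (fun k => k ∉ Gamma) with hA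
  have h1 : Wtilde ∩ {pq : ℕ × ℕ | pq.1 ∈ Set.Icc 1 N ∧ pq.2 ∈ Set.Icc 1 N}
      = (((A ×ˢ A).filter (fun pq => Nat.gcd pq.1 pq.2 = 1) : Finset (ℕ × ℕ)) : Set (ℕ × ℕ)) := by
    ext ⟨p, q⟩
    simp only [Wtilde, hA, Nat.Coprime, Set.mem_inter_iff, Set.mem_setOf_eq, Finset.coe_filter,
      Finset.mem_product, Finset.mem_filter, Finset.mem_Icc, Set.mem_Icc]
    tauto
  rw [h1, Set.ncard_coe_finset, Finset.card_filter]
  push_cast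
  have h2 : ∀ pq ∈ A ×ˢ A, (if Nat.gcd pq.1 pq.2 = 1 then (1 : ℝ) else 0)
      = ∑ d ∈ Finset.Icc 1 N, (moebius d : ℝ) *
        ((if d ∣ pq.1 then 1 else 0) * (if d ∣ pq.2 then 1 else 0)) := by
    rintro ⟨p, q⟩ hpq
    simp only [hA, Finset.mem_product, Finset.mem_filter, Finset.mem_Icc] at hpq
    rw [← sum_mu_divisors]
    have : (Nat.gcd p q).divisors = (Finset.Icc 1 N).filter (fun d => d ∣ p ∧ d ∣ q) := by
      ext d
      simp only [Nat.mem_divisors, Finset.mem_filter, Finset.mem_Icc, Nat.dvd_gcd_iff]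
      constructor
      · rintro ⟨⟨ha, hb⟩, _⟩
        exact ⟨⟨Nat.pos_of_dvd_of_pos ha (by omega), (Nat.le_of_dvd (by omega) ha).trans (by omega)⟩,
          ha, hb⟩
      · rintro ⟨_, h⟩
        exact ⟨h, (Nat.gcd_pos_of_pos_left _ (by omega)).ne'⟩
    simp only [this, Finset.sum_filter]
    refine Finset.sum_congr rfl fun d _ => ?_
    by_cases ha : d ∣ p <;> by_cases hb : d ∣ q <;> simp [ha, hb]
  rw [Finset.sum_congr rfl h2, Finset.sum_comm]
  refine Finset.sum_congr rfl fun d _ => ?_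
  rw [← Finset.mul_sum, Finset.sum_product]
  dsimp only
  have h3 := Finset.sum_mul_sum A A (fun x => if d ∣ x then (1 : ℝ) else 0)
    (fun x => if d ∣ x then (1 : ℝ) else 0)
  refine (congrArg (fun t => (moebius d : ℝ) * t) h3.symm).trans ?_
  rw [← sq]
  congr 2
  rw [Finset.sum_boole, hA, Finset.filter_filter]
  unfold cntMul
  simp only [and_comm]

theorem cntMul_bound (P : ℕ → Prop) (d N : ℕ) : (cntMul P d N : ℝ) / N ≤ 1 / d := by
  rcases Nat.eq_zero_or_pos d with rfl | hd
  · have : cntMul P 0 N = 0 := by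
      classical
      unfold cntMul
      rw [Finset.card_eq_zero, Finset.filter_eq_empty_iff]
      intro x hx
      simp only [Finset.mem_Icc] at hx
      rintro ⟨h, _⟩
      have := Nat.eq_zero_of_zero_dvd h
      omega
    simp [this]
  · rcases Nat.eq_zero_or_pos N with rfl | hN
    · simp
    have h1 := cnt_le (fun k => P (d * k)) (N / d)
    rw [← cntMul_eq _ _ _ hd, Nat.le_div_iff_mul_le hd] at h1
    have h2 : (cntMul P d N : ℝ) * d ≤ N := by exact_mod_cast h1
    rw [div_le_div_iff₀ (by positivity) (by positivity)]
    linarith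

theorem cntMul_zero (P : ℕ → Prop) (d N : ℕ) (hd : d ∉ Finset.Icc 1 N) : cntMul P d N = 0 := by
  classical
  unfold cntMul
  rw [Finset.card_eq_zero, Finset.filter_eq_empty_iff]
  intro x hx
  simp only [Finset.mem_Icc] at hx hd
  rintro ⟨h, _⟩
  have := Nat.le_of_dvd (by omega) h
  have := Nat.pos_of_dvd_of_pos h (by omega)
  omega

theorem density_Wtilde :
    Tendsto (fun N : ℕ =>
        ((Wtilde ∩ {pq : ℕ × ℕ | pq.1 ∈ Set.Icc 1 N ∧ pq.2 ∈ Set.Icc 1 N}).ncard : ℝ)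
          / (N : ℝ)^2)
      atTop (𝓝 (10 / (3 * Real.pi^2))) := by
  have hb : Summable (fun d : ℕ => 1 / (d : ℝ) ^ 2) := Real.summable_one_div_nat_pow.2 (by norm_num)
  have h := tendsto_tsum_of_dominated_convergence hb term_tendsto (Eventually.of_forall fun N d => by
    rw [norm_mul, norm_pow, ← one_mul (1 / (d : ℝ) ^ 2), ← one_div_pow]
    have h1 : ‖(ArithmeticFunction.moebius d : ℝ)‖ ≤ 1 := by
      rw [Real.norm_eq_abs]
      exact_mod_cast ArithmeticFunction.abs_moebius_le_one
    have h2 := cntMul_bound (fun k => k ∉ Gamma) d N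
    rw [Real.norm_of_nonneg (by positivity : (0 : ℝ) ≤ (cntMul (fun k => k ∉ Gamma) d N : ℝ) / N)]
    gcongr)
  rw [hasSum_OE.tsum_eq] at h
  refine h.congr fun N => ?_
  rw [count_eq, tsum_eq_sum (s := Finset.Icc 1 N), Finset.sum_div]
  · refine Finset.sum_congr rfl fun d _ => ?_
    rw [div_pow, mul_div_assoc]
  · intro d hd
    have : cntMul (fun k => k ∉ Gamma) d N = 0 := cntMul_zero _ d N hd
    simp [this]
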